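/- Let E be a subset of ℝ⁺. Then E is lower nonporous at 0 if and only if the set ℝ⁺ − E(q) is strongly porous at 0 for every q > 1, where E(q) is the q-blow up of E. -/

import Mathlib

/-!
Both porosity conditions become statements about arbitrarily small scales `h`:
`E` is lower nonporous iff for each `ε > 0` some such `h` has all gaps of `E` in `(0, h)` shorter
than `ε h` (`lowerPorosity_eq_zero_iff`), and a set is strongly porous iff for each `ε > 0` some
such `h` has a gap longer than `(1 - ε) h` (`upperPorosity_eq_one_iff`).

A positive point `x` lies in `E(q)` exactly when `E` meets `(x / q, q x)`.
If all gaps of `E` in `(0, h)` are shorter than `δ (1 - 1 / q) h`, then `E` meets `(x / q, x)` for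
each `x ∈ (δ h, h)`, so `(δ h, h)` is a gap of the complement of `E(q)`. Conversely, suppose
`(a, b) ⊆ E(q)` with `a` much smaller than `b`. A gap `(c, d)` of `E` in `(0, b)` of length at least
`ε b` has `c ≤ (1 - ε) d`, so for `q` close to `1` the point `d / q` belongs to `(a, b)` but
`(d / q², d) ⊆ (c, d)` misses `E`, a contradiction. So at scale `b` all gaps of `E` are short.
-/


open Filter Set

/-- `gapLength E h` = λ(E,h): the length of the largest open subinterval of (0,h)
containing no point of `E` (0 if no such interval exists). -/
noncomputable def gapLength (E : Set ℝ) (h : ℝ) : ℝ :=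
  sSup {l : ℝ | ∃ a b : ℝ, 0 ≤ a ∧ a ≤ b ∧ b ≤ h ∧ Set.Ioo a b ∩ E = ∅ ∧ l = b - a}

/-- The right upper porosity of `E` at 0. -/
noncomputable def upperPorosity (E : Set ℝ) : ℝ :=
  Filter.limsup (fun h => gapLength E h / h) (nhdsWithin (0:ℝ) (Set.Ioi 0))

/-- The right lower porosity of `E` at 0. -/
noncomputable def lowerPorosity (E : Set ℝ) : ℝ :=
  Filter.liminf (fun h => gapLength E h / h) (nhdsWithin (0:ℝ) (Set.Ioi 0))

/-- `UMP E`: sequences of positive reals tending to 0 along which the upper limit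
in the definition of porosity is attained. -/
def UMP (E : Set ℝ) : Set (ℕ → ℝ) :=
  {h | (∀ n, 0 < h n) ∧ Filter.Tendsto h Filter.atTop (nhds 0) ∧
    Filter.Tendsto (fun n => gapLength E (h n) / h n) Filter.atTop (nhds (upperPorosity E))}

/-- The set of all strongly porous at 0 subsets of ℝ⁺. -/
def SP : Set (Set ℝ) := {E | E ⊆ Set.Ici 0 ∧ upperPorosity E = 1}

/-- `I` is an ideal on the set `X`. -/
def IsIdealOn (X : Set ℝ) (I : Set (Set ℝ)) : Prop :=
  I.Nonempty ∧ (∀ B ∈ I, B ⊆ X) ∧ (∀ B ∈ I, ∀ C : Set ℝ, C ⊆ B → C ∈ I) ∧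
    (∀ B ∈ I, ∀ C ∈ I, B ∪ C ∈ I) ∧ X ∉ I

/-- `I` is a `Γ`-maximal ideal on `X`. -/
def IsMaximalIdealIn (X : Set ℝ) (Γ I : Set (Set ℝ)) : Prop :=
  IsIdealOn X I ∧ I ⊆ Γ ∧ ∀ J : Set (Set ℝ), IsIdealOn X J → I ⊆ J → J ⊆ Γ → I = J

/-- `Î(SP)`: the intersection of all SP-maximal ideals on ℝ⁺. -/
def hatISP : Set (Set ℝ) :=
  {A | ∀ I : Set (Set ℝ), IsMaximalIdealIn (Set.Ici 0) SP I → A ∈ I}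

/-- The q-blow up `E(q)` of a set `E ⊆ ℝ⁺`. -/
def blowUp (E : Set ℝ) (q : ℝ) : Set ℝ := ⋃ x ∈ E, Set.Ioo (q⁻¹ * x) (q * x)

lemma le_gapLength {E : Set ℝ} {h a b : ℝ} (ha : 0 ≤ a) (hab : a ≤ b) (hb : b ≤ h)
    (hE : Set.Ioo a b ∩ E = ∅) : b - a ≤ gapLength E h := by
  refine le_csSup ⟨h, ?_⟩ ⟨a, b, ha, hab, hb, hE, rfl⟩
  rintro l ⟨a, b, ha, hab, hb, -, rfl⟩
  linarith

lemma gapLength_le {E : Set ℝ} {h m : ℝ} (hh : 0 ≤ h)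
    (H : ∀ a b : ℝ, 0 ≤ a → a ≤ b → b ≤ h → Set.Ioo a b ∩ E = ∅ → b - a ≤ m) :
    gapLength E h ≤ m := by
  refine csSup_le ⟨0, 0, 0, le_rfl, le_rfl, hh, by simp, by simp⟩ ?_
  rintro l ⟨a, b, ha, hab, hb, hE, rfl⟩
  exact H a b ha hab hb hE

lemma exists_gap_of_lt {E : Set ℝ} {h m : ℝ} (hh : 0 ≤ h) (H : m < gapLength E h) :
    ∃ a b : ℝ, 0 ≤ a ∧ a ≤ b ∧ b ≤ h ∧ Set.Ioo a b ∩ E = ∅ ∧ m < b - a := by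
  by_contra! hc
  exact absurd (gapLength_le hh hc) (not_le.2 H)

lemma eventually_ratio_mem_Icc (E : Set ℝ) :
    ∀ᶠ h in nhdsWithin (0:ℝ) (Set.Ioi 0), 0 ≤ gapLength E h / h ∧ gapLength E h / h ≤ 1 := by
  filter_upwards [self_mem_nhdsWithin] with h hh
  have hh : 0 < h := hh
  have h0 : 0 ≤ gapLength E h := by
    simpa using le_gapLength (E := E) (le_refl (0:ℝ)) le_rfl hh.le (by simp)
  have h1 : gapLength E h ≤ h := gapLength_le hh.le fun a b ha _ hb _ => by linarith
  exact ⟨by positivity, (div_le_one hh).2 h1⟩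

lemma lowerPorosity_eq_zero_iff (E : Set ℝ) :
    lowerPorosity E = 0 ↔
      ∀ ε > 0, ∀ r > 0, ∃ h : ℝ, 0 < h ∧ h < r ∧ gapLength E h < ε * h := by
  have hb := eventually_ratio_mem_Icc E
  have hge : IsBoundedUnder (· ≥ ·) (nhdsWithin (0:ℝ) (Set.Ioi 0)) fun h => gapLength E h / h :=
    isBoundedUnder_of_eventually_ge (hb.mono fun _ h => h.1)
  have hle : IsBoundedUnder (· ≤ ·) (nhdsWithin (0:ℝ) (Set.Ioi 0)) fun h => gapLength E h / h :=
    isBoundedUnder_of_eventually_le (hb.mono fun _ h => h.2)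
  constructor
  · intro H ε hε r hr
    have hf := frequently_lt_of_liminf_lt hle.isCoboundedUnder_ge
      (show lowerPorosity E < ε by rw [H]; exact hε)
    obtain ⟨h, ⟨h0, h1⟩, h2⟩ := (nhdsGT_basis (0:ℝ)).frequently_iff.1 hf r hr
    exact ⟨h, h0, h1, (div_lt_iff₀ h0).1 h2⟩
  · intro H
    refine le_antisymm (le_of_forall_pos_le_add fun ε hε => ?_)
      (le_liminf_of_le hle.isCoboundedUnder_ge (hb.mono fun _ h => h.1))
    refine liminf_le_of_frequently_le ((nhdsGT_basis (0:ℝ)).frequently_iff.2 fun r hr => ?_) hge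
    obtain ⟨h, h0, h1, h2⟩ := H ε hε r hr
    refine ⟨h, ⟨h0, h1⟩, ?_⟩
    rw [zero_add]
    exact (div_le_iff₀ h0).2 h2.le

lemma upperPorosity_eq_one_iff (E : Set ℝ) :
    upperPorosity E = 1 ↔
      ∀ ε > 0, ∀ r > 0, ∃ h : ℝ, 0 < h ∧ h < r ∧ (1 - ε) * h < gapLength E h := by
  have hb := eventually_ratio_mem_Icc E
  have hge : IsBoundedUnder (· ≥ ·) (nhdsWithin (0:ℝ) (Set.Ioi 0)) fun h => gapLength E h / h :=
    isBoundedUnder_of_eventually_ge (hb.mono fun _ h => h.1)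
  have hle : IsBoundedUnder (· ≤ ·) (nhdsWithin (0:ℝ) (Set.Ioi 0)) fun h => gapLength E h / h :=
    isBoundedUnder_of_eventually_le (hb.mono fun _ h => h.2)
  constructor
  · intro H ε hε r hr
    have hf := frequently_lt_of_lt_limsup hge.isCoboundedUnder_le
      (show 1 - ε < upperPorosity E by rw [H]; linarith)
    obtain ⟨h, ⟨h0, h1⟩, h2⟩ := (nhdsGT_basis (0:ℝ)).frequently_iff.1 hf r hr
    exact ⟨h, h0, h1, (lt_div_iff₀ h0).1 h2⟩
  · intro H
    refine le_antisymm (limsup_le_of_le hge.isCoboundedUnder_le (hb.mono fun _ h => h.2))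
      (le_of_forall_pos_le_add fun ε hε => ?_)
    rw [← sub_le_iff_le_add]
    refine le_limsup_of_frequently_le ((nhdsGT_basis (0:ℝ)).frequently_iff.2 fun r hr => ?_) hle
    obtain ⟨h, h0, h1, h2⟩ := H ε hε r hr
    exact ⟨h, ⟨h0, h1⟩, (le_div_iff₀ h0).2 h2.le⟩

theorem stmt18 (E : Set ℝ) (hE : E ⊆ Set.Ici 0) :
    lowerPorosity E = 0 ↔ ∀ q : ℝ, 1 < q → upperPorosity (Set.Ici 0 \ blowUp E q) = 1 := by
  rw [lowerPorosity_eq_zero_iff]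
  simp_rw [upperPorosity_eq_one_iff]
  constructor
  · intro H q hq ε hε r hr
    have hq0 : 0 < q := by linarith
    have hqi : q⁻¹ < 1 := inv_lt_one_of_one_lt₀ hq
    have hqi0 : 0 < q⁻¹ := by positivity
    obtain ⟨δ, hδ0, hδε, hδ1⟩ : ∃ δ : ℝ, 0 < δ ∧ δ < ε ∧ δ ≤ 1 :=
      ⟨min (ε / 2) 1, by positivity, (min_le_left _ _).trans_lt (by linarith), min_le_right _ _⟩
    obtain ⟨h, h0, hhr, hg⟩ := H (δ * (1 - q⁻¹)) (mul_pos hδ0 (by linarith)) r hr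
    refine ⟨h, h0, hhr, lt_of_lt_of_le ?_ (le_gapLength (a := δ * h) (b := h)
      (by positivity) (by nlinarith) le_rfl ?_)⟩
    · nlinarith
    · rw [Set.eq_empty_iff_forall_notMem]
      rintro x ⟨⟨hx1, hx2⟩, -, hx3⟩
      have hx0 : 0 < x := lt_trans (by positivity) hx1
      apply hx3
      by_contra hx
      have hgap : Set.Ioo (q⁻¹ * x) x ∩ E = ∅ := by
        rw [Set.eq_empty_iff_forall_notMem]
        rintro e ⟨⟨he1, he2⟩, heE⟩
        apply hx
        simp only [blowUp, Set.mem_iUnion, Set.mem_Ioo]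
        refine ⟨e, heE, ?_, ?_⟩
        · have : 0 < e := lt_trans (by positivity) he1
          nlinarith
        · rwa [inv_mul_lt_iff₀ hq0] at he1
      have := le_gapLength (by positivity) (by nlinarith) hx2.le hgap
      nlinarith [mul_lt_mul_of_pos_right hx1 (sub_pos.2 hqi)]
  · intro H ε hε r hr
    obtain ⟨η, hη0, hηε, hη1⟩ : ∃ η : ℝ, 0 < η ∧ η < ε ∧ η ≤ 1 / 2 :=
      ⟨min (ε / 2) (1 / 2), by positivity, (min_le_left _ _).trans_lt (by linarith),
        min_le_right _ _⟩
    -- `p` is the inverse of the blow-up factor; it is chosen so that `1 - η ≤ p ^ 2`.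
    obtain ⟨p, hp⟩ : ∃ p : ℝ, p = 1 - η / 2 := ⟨_, rfl⟩
    have hp0 : 0 < p := by linarith
    have hp1 : p < 1 := by linarith
    have hp2 : 1 - η ≤ p * p := by rw [hp]; nlinarith
    obtain ⟨h, h0, hhr, hg⟩ := H p⁻¹ (one_lt_inv₀ hp0 |>.2 hp1) (η / 4) (by positivity) r hr
    obtain ⟨a, b, ha, hab, hbh, hgap, hl⟩ := exists_gap_of_lt h0.le hg
    have hb : 7 / 8 * h < b := by nlinarith
    have hb0 : 0 < b := by nlinarith
    have hab' : a < η / 2 * b := by nlinarith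
    refine ⟨b, hb0, hbh.trans_lt hhr, lt_of_le_of_lt (gapLength_le (m := η * b) hb0.le ?_)
      (by nlinarith)⟩
    intro c d hc hcd hdb hcdE
    by_contra! hlong
    have hd : η * b < d := by linarith
    have hd0 : 0 < d := lt_trans (by positivity) hd
    have hcd' : c ≤ p * p * d := by nlinarith
    have hxa : a < p * d := by nlinarith
    have hxb : p * d < b := by nlinarith
    have hx : p * d ∈ blowUp E p⁻¹ := by
      by_contra hx
      exact Set.eq_empty_iff_forall_notMem.1 hgap (p * d)
        ⟨⟨hxa, hxb⟩, (by positivity : (0:ℝ) ≤ p * d), hx⟩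
    simp only [blowUp, Set.mem_iUnion, Set.mem_Ioo, inv_inv] at hx
    obtain ⟨e, heE, he1, he2⟩ := hx
    rw [lt_inv_mul_iff₀ hp0] at he2
    exact Set.eq_empty_iff_forall_notMem.1 hcdE e
      ⟨⟨by linarith, lt_of_mul_lt_mul_left he1 hp0.le⟩, heE⟩
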